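/- arXiv:math/0307290 — 2 statements merged into one kernel-verified Lean document; each statement's English description precedes it below -/
import Mathlib

section
/- Let γ ∈ ℝ and let a : ℝ → ℝ be differentiable with a'(t) = -γ a(t) - a(t)³/12 for all t. Define u(x,t) = a(t) sin x - (a(t)²/6) sin 2x. Then u(0,t) = u(π,t) = 0 for all t, and for all x and t the residual of the deterministic Burgers-type equation satisfies exactly: ∂ₜu + u ∂ₓu - ∂ₓₓu - (1-γ)u = (γ a(t)²/6 + a(t)⁴/36) sin 2x - (a(t)³/4) sin 3x + (a(t)⁴/36) sin 4x. In particular the residual contains no sin x or sin 2x component at orders a, a² or a³ with γ = 0, verifying the centre manifold approximation u = a sin x - (a²/6) sin 2x with amplitude equation ȧ = -γa - a³/12 to the stated order. -/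
open Real

/-- Centre manifold approximation residual for the deterministic Burgers-type
equation `∂ₜu = -u∂ₓu + ∂ₓₓu + (1-γ)u`, with field
`u = a sin x - (a²/6) sin 2x` and amplitude equation `ȧ = -γa - a³/12`. -/
theorem stmt_0 (γ : ℝ) (a : ℝ → ℝ) (ha : Differentiable ℝ a)
    (hode : ∀ t, deriv a t = -γ * a t - (a t) ^ 3 / 12)
    (u : ℝ → ℝ → ℝ)
    (hu : ∀ x t, u x t = a t * sin x - (a t) ^ 2 / 6 * sin (2 * x)) :
    (∀ t, u 0 t = 0 ∧ u π t = 0) ∧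
    ∀ x t,
      deriv (fun s => u x s) t + u x t * deriv (fun y => u y t) x
        - deriv (fun y => deriv (fun y' => u y' t) y) x - (1 - γ) * u x t
      = (γ * (a t) ^ 2 / 6 + (a t) ^ 4 / 36) * sin (2 * x)
        - (a t) ^ 3 / 4 * sin (3 * x) + (a t) ^ 4 / 36 * sin (4 * x) := by
  have hux : ∀ t y, HasDerivAt (fun y => u y t)
      (a t * cos y - (a t) ^ 2 / 6 * (cos (2 * y) * 2)) y := by
    intro t y
    have h2 : HasDerivAt (fun y : ℝ => 2 * y) 2 y := by
      simpa using (hasDerivAt_id y).const_mul 2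
    have := ((hasDerivAt_sin y).const_mul (a t)).sub (h2.sin.const_mul ((a t) ^ 2 / 6))
    exact this.congr_of_eventuallyEq (Filter.Eventually.of_forall fun z => hu z t)
  have huxx : ∀ t y, HasDerivAt (fun y => a t * cos y - (a t) ^ 2 / 6 * (cos (2 * y) * 2))
      (a t * (-sin y) - (a t) ^ 2 / 6 * (-sin (2 * y) * 2 * 2)) y := by
    intro t y
    have h2 : HasDerivAt (fun y : ℝ => 2 * y) 2 y := by
      simpa using (hasDerivAt_id y).const_mul 2
    exact ((hasDerivAt_cos y).const_mul (a t)).sub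
      ((h2.cos.mul_const 2).const_mul ((a t) ^ 2 / 6))
  have hut : ∀ x t, HasDerivAt (fun s => u x s)
      (deriv a t * sin x - (2 * a t * deriv a t) / 6 * sin (2 * x)) t := by
    intro x t
    have h1 := (ha t).hasDerivAt
    have h3 : HasDerivAt (fun s => (a s) ^ 2) (2 * a t * deriv a t) t := by
      have h := h1.fun_pow 2
      simpa using h
    have := (h1.mul_const (sin x)).sub ((h3.div_const 6).mul_const (sin (2 * x)))
    exact this.congr_of_eventuallyEq (Filter.Eventually.of_forall fun z => hu x z)
  refine ⟨fun t => ⟨by simp [hu], by simp [hu]⟩, fun x t => ?_⟩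
  have e : (fun y => deriv (fun y' => u y' t) y)
      = fun y => a t * cos y - (a t) ^ 2 / 6 * (cos (2 * y) * 2) :=
    funext fun y => (hux t y).deriv
  rw [e, (huxx t x).deriv, (hux t x).deriv, (hut x t).deriv, hode, hu]
  have h4 : sin (4 * x) = 2 * sin (2 * x) * cos (2 * x) := by
    rw [← sin_two_mul]; ring_nf
  have hc : cos x ^ 2 = 1 - sin x ^ 2 := by linarith [sin_sq_add_cos_sq x]
  rw [h4, sin_three_mul, cos_two_mul, sin_two_mul, hc]
  linear_combination (-(a t) ^ 3 / 3 * sin x) * hc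
end

section
/- Let β₁, β₂ > 0 and define ρ : ℝ² → ℝ by ρ(z₁, z₂) = exp[-(β₁+β₂)z₁² + 2β₂(β₁+β₂)z₁z₂ - β₂(β₁+β₂)²z₂²]. Then ρ satisfies the stationary Fokker–Planck equation of the system ż₁ = -β₁z₁ + φ, ż₂ = -β₂z₂ + z₁ driven by unit white noise φ in z₁; that is, for all (z₁, z₂): ∂_{z₁}(β₁ z₁ ρ) + ∂_{z₂}((β₂ z₂ - z₁) ρ) + (1/2) ∂²_{z₁z₁} ρ = 0. -/
open Real

/-- The Gaussian density `ρ(z₁,z₂) = exp[-(β₁+β₂)z₁² + 2β₂(β₁+β₂)z₁z₂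
- β₂(β₁+β₂)²z₂²]` satisfies the stationary Fokker–Planck equation of the
system `ż₁ = -β₁z₁ + φ`, `ż₂ = -β₂z₂ + z₁` driven by unit white noise. -/
theorem stmt_3 (β₁ β₂ : ℝ) (hβ₁ : 0 < β₁) (hβ₂ : 0 < β₂)
    (ρ : ℝ → ℝ → ℝ)
    (hρ : ∀ z₁ z₂, ρ z₁ z₂ =
      exp (-(β₁ + β₂) * z₁ ^ 2 + 2 * β₂ * (β₁ + β₂) * z₁ * z₂
        - β₂ * (β₁ + β₂) ^ 2 * z₂ ^ 2)) :
    ∀ z₁ z₂ : ℝ,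
      deriv (fun w => β₁ * w * ρ w z₂) z₁
        + deriv (fun w => (β₂ * w - z₁) * ρ z₁ w) z₂
        + (1 / 2) * deriv (fun w => deriv (fun v => ρ v z₂) w) z₁ = 0 := by
  intro z₁ z₂
  have h1 : ∀ a b : ℝ, HasDerivAt (fun v => ρ v b)
      (ρ a b * (-2 * (β₁ + β₂) * a + 2 * β₂ * (β₁ + β₂) * b)) a := by
    intro a b
    have e : (fun v => ρ v b) = fun v => exp (-(β₁ + β₂) * v ^ 2 + 2 * β₂ * (β₁ + β₂) * v * b
        - β₂ * (β₁ + β₂) ^ 2 * b ^ 2) := funext fun v => hρ v b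
    rw [e, hρ a b]
    refine HasDerivAt.exp (HasDerivAt.congr_deriv (((((hasDerivAt_id' a).pow 2).const_mul _).add
      (((hasDerivAt_id' a).const_mul _).mul_const b)).sub_const _) ?_)
    push_cast
    ring
  have h2 : ∀ a b : ℝ, HasDerivAt (fun v => ρ a v)
      (ρ a b * (2 * β₂ * (β₁ + β₂) * a - 2 * β₂ * (β₁ + β₂) ^ 2 * b)) b := by
    intro a b
    have e : (fun v => ρ a v) = fun v => exp (-(β₁ + β₂) * a ^ 2 + 2 * β₂ * (β₁ + β₂) * a * v
        - β₂ * (β₁ + β₂) ^ 2 * v ^ 2) := funext fun v => hρ a v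
    rw [e, hρ a b]
    refine HasDerivAt.exp (HasDerivAt.congr_deriv ((((hasDerivAt_id' b).const_mul _).const_add _).sub
      (((hasDerivAt_id' b).pow 2).const_mul _)) ?_)
    push_cast
    ring
  have e3 : (fun w => deriv (fun v => ρ v z₂) w) = fun w =>
      ρ w z₂ * (-2 * (β₁ + β₂) * w + 2 * β₂ * (β₁ + β₂) * z₂) :=
    funext fun w => (h1 w z₂).deriv
  have d1 := (((hasDerivAt_id' z₁).const_mul β₁).fun_mul (h1 z₁ z₂)).deriv
  have d2 := ((((hasDerivAt_id' z₂).const_mul β₂).sub_const z₁).fun_mul (h2 z₁ z₂)).deriv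
  have d3 := ((h1 z₁ z₂).fun_mul (((hasDerivAt_id' z₁).const_mul (-2 * (β₁ + β₂))).add_const
    (2 * β₂ * (β₁ + β₂) * z₂))).deriv
  rw [e3, d1, d2, d3]
  ring
end
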